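/- Given a triangulation T of S and l ∈ ℝ^{E(T)}_Δ, the topology on S induced by the metric d[l] coincides with the original topology on S. -/

import Mathlib

noncomputable section

open Set
open scoped ENNReal

/-- The Euclidean plane `ℝ²` with the Euclidean metric. -/
abbrev E2 : Type := EuclideanSpace ℝ (Fin 2)

/-- Vertices of the fixed closed regular (equilateral) triangle of side length 1. -/
def p0 : E2 := !₂[0, 0]
def p1 : E2 := !₂[1, 0]
def p2 : E2 := !₂[1 / 2, Real.sqrt 3 / 2]

/-- `Dtri` is the fixed closed regular triangle in `ℝ²` with edge length 1. -/
def Dtri : Set E2 := convexHull ℝ {p0, p1, p2}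

/-- `V0` is the set of the three vertices of `Dtri`. -/
def V0 : Set E2 := {p0, p1, p2}

/-- The three closed edges of `Dtri`. -/
def e01 : Set E2 := segment ℝ p0 p1
def e12 : Set E2 := segment ℝ p1 p2
def e02 : Set E2 := segment ℝ p0 p2

/-- `E0` is the set of the three closed edges of `Dtri`. -/
def E0 : Set (Set E2) := {e01, e12, e02}

/-- The open edge `e° = e ∖ V₀`. -/
def eo (e : Set E2) : Set E2 := e \ V0

/-- `Do = D°` is the interior of `Dtri` in `ℝ²`. -/
def Do : Set E2 := interior Dtri

/-- `l : E₀ → ℝ` is positive and satisfies the strict triangle inequalities: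
`l e₁ + l e₂ > l e₃` whenever `{e₁, e₂, e₃} = E₀`. -/
def TriIneq (l : Set E2 → ℝ) : Prop :=
  (∀ e ∈ E0, 0 < l e) ∧
  ∀ e₁ e₂ e₃ : Set E2, ({e₁, e₂, e₃} : Set (Set E2)) = E0 → l e₁ + l e₂ > l e₃

/-- A linear map `f : ℝ² → ℝ²` realizes the edge lengths `l`, i.e. for each `e ∈ E₀`
the segment `f(e)` has Euclidean length `l e`. -/
def Realizes (f : E2 →ₗ[ℝ] E2) (l : Set E2 → ℝ) : Prop :=
  dist (f p0) (f p1) = l e01 ∧ dist (f p1) (f p2) = l e12 ∧ dist (f p0) (f p2) = l e02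

/-- The metric `d[l]` on `Dtri`, defined by `d[l](x,y) = |f x - f y|₂` for a linear map `f`
realizing the edge lengths `l` (this is independent of the choice of `f`). -/
def dD (l : Set E2 → ℝ) (x y : E2) : ℝ :=
  letI := Classical.propDecidable (∃ f : E2 →ₗ[ℝ] E2, Realizes f l)
  if h : ∃ f : E2 →ₗ[ℝ] E2, Realizes f l then dist (h.choose x) (h.choose y) else 0

/-- A triangulation `T = (σᵢ)_{i ∈ I}`, `I = Fin n`, of a topological space `S`:
a finite family of continuous maps `σᵢ : Dtri → S` such that
(a) `σᵢ` is injective on each open edge, (b) `σᵢ` is injective on `D°`,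
(c) `S` is the disjoint union of `⋃ᵢ σᵢ(V₀)`, the sets `σᵢ(D°)`, and the distinct sets
among the `σᵢ(e°)`, and (d) glued edges are identified by a linear homeomorphism. -/
structure Triangulation (S : Type) [TopologicalSpace S] (n : ℕ) where
  σ : Fin n → E2 → S
  continuousOn : ∀ i, ContinuousOn (σ i) Dtri
  inj_edge : ∀ i, ∀ e ∈ E0, InjOn (σ i) (eo e)
  inj_int : ∀ i, InjOn (σ i) Do
  cover : (⋃ i, σ i '' V0) ∪ (⋃ i, σ i '' Do) ∪ (⋃ i, ⋃ e ∈ E0, σ i '' eo e) = univ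
  disj_int : ∀ i j, i ≠ j → Disjoint (σ i '' Do) (σ j '' Do)
  disj_vert_int : ∀ j, Disjoint (⋃ i, σ i '' V0) (σ j '' Do)
  disj_vert_edge : ∀ j, ∀ e ∈ E0, Disjoint (⋃ i, σ i '' V0) (σ j '' eo e)
  disj_int_edge : ∀ i j, ∀ e ∈ E0, Disjoint (σ i '' Do) (σ j '' eo e)
  edge_eq_or_disjoint : ∀ i j, ∀ e ∈ E0, ∀ e' ∈ E0,
    σ i '' eo e = σ j '' eo e' ∨ Disjoint (σ i '' eo e) (σ j '' eo e')
  glue : ∀ i j, ∀ e ∈ E0, ∀ e' ∈ E0, σ i '' eo e = σ j '' eo e' →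
    ∃ A : E2 →ᵃ[ℝ] E2, A '' e = e' ∧ ∀ x ∈ e, σ j (A x) = σ i x

variable {S : Type} [TopologicalSpace S] {n : ℕ}

/-- `l ∈ ℝ^{E(T)}_Δ`: `l` assigns positive lengths to the edges of `T` satisfying the
strict triangle inequalities in each triangle. -/
def TriIneqT (T : Triangulation S n) (l : Set S → ℝ) : Prop :=
  (∀ (i : Fin n), ∀ e ∈ E0, 0 < l (T.σ i '' e)) ∧
  ∀ (i : Fin n), ∀ e₁ e₂ e₃ : Set E2, ({e₁, e₂, e₃} : Set (Set E2)) = E0 →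
    l (T.σ i '' e₁) + l (T.σ i '' e₂) > l (T.σ i '' e₃)

/-- The restricted edge lengths `l^{(i)}` on the triangle `σᵢ(D)`: `l^{(i)}_e = l_{σᵢ(e)}`. -/
def lRes (T : Triangulation S n) (l : Set S → ℝ) (i : Fin n) : Set E2 → ℝ :=
  fun e => l (T.σ i '' e)

/-- `dᵢ(x,y) = min { d[l^{(i)}](x',y') : x' ∈ σᵢ⁻¹(x), y' ∈ σᵢ⁻¹(y) }` for `x, y ∈ σᵢ(D)`. -/
def dTri (T : Triangulation S n) (l : Set S → ℝ) (i : Fin n) (x y : S) : ℝ :=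
  sInf { r | ∃ x' ∈ Dtri, ∃ y' ∈ Dtri,
    T.σ i x' = x ∧ T.σ i y' = y ∧ r = dD (lRes T l i) x' y' }

/-- The set of sums `Σ_j d_{i_j}(x_{j-1}, x_j)` over chains from `x` to `y`. -/
def chainSums (T : Triangulation S n) (l : Set S → ℝ) (x y : S) : Set ℝ :=
  { r | ∃ (k : ℕ) (c : ℕ → S) (idx : ℕ → Fin n),
      c 0 = x ∧ c k = y ∧
      (∀ j < k, c j ∈ T.σ (idx j) '' Dtri ∧ c (j + 1) ∈ T.σ (idx j) '' Dtri) ∧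
      r = ∑ j ∈ Finset.range k, dTri T l (idx j) (c j) (c (j + 1)) }

/-- The glued metric `d[l]` on `S`. -/
def dGlue (T : Triangulation S n) (l : Set S → ℝ) (x y : S) : ℝ :=
  sInf (chainSums T l x y)

/-! On each triangle `d[l]` is comparable to the Euclidean metric, with one constant `C` for all
triangles, and all triangles have edge length 1, so the gluing maps between them are isometric on
closed faces.

Near a point `x` the Euclidean picture is therefore consistent: for small `r`, the set of points
that lie, in some triangle, at distance less than `r` from a preimage of `x` does not depend on the
triangle in which the distance is measured. A link of a chain of `dᵢ`-length `d` moves the distance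
to the nearest preimage of `x` by at most `C * d`, hence a chain from `x` of total length less than
`r / C` stays in this set, and for small `r` the set lies in any given neighbourhood of `x`.

Conversely `S` carries the quotient topology of the disjoint union of the triangles, and there
`d[l]` is bounded by `C` times the Euclidean distance. -/

section AffineBasis

variable {ι k V W : Type*} [Field k] [AddCommGroup V] [Module k V] [AddCommGroup W] [Module k W]

lemma exists_linearMap_sub_eq (b : AffineBasis ι k V) (q : ι → W) :
    ∃ f : V →ₗ[k] W, ∀ i j, f (b i) - f (b j) = q i - q j := by
  obtain ⟨m⟩ := b.nonempty
  let f := (b.basisOf m).constr k fun j => q j - q m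
  have hf (i : ι) : f (b i) - f (b m) = q i - q m := by
    by_cases hi : i = m
    · rw [hi, sub_self, sub_self]
    · simpa only [AffineBasis.basisOf_apply, vsub_eq_sub, map_sub] using
        (b.basisOf m).constr_basis k (fun j => q j - q m) ⟨i, hi⟩
  exact ⟨f, fun i j => by
    rw [← sub_sub_sub_cancel_right _ _ (f (b m)), hf, hf, sub_sub_sub_cancel_right]⟩

lemma ker_eq_bot_of_affineIndependent_comp (b : AffineBasis ι k V) {f : V →ₗ[k] W}
    (h : AffineIndependent k (f ∘ b)) : LinearMap.ker f = ⊥ := by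
  obtain ⟨m⟩ := b.nonempty
  have hcomp : f ∘ b.basisOf m = fun i : {j // j ≠ m} => (f ∘ b) i -ᵥ (f ∘ b) m := by
    ext i
    simp only [Function.comp_apply, AffineBasis.basisOf_apply, vsub_eq_sub, map_sub]
  have hli : LinearIndependent k (f ∘ b.basisOf m) := by
    rw [hcomp]
    exact (affineIndependent_iff_linearIndependent_vsub k _ m).1 h
  simpa only [(b.basisOf m).span_eq, top_disjoint] using Submodule.range_ker_disjoint hli

lemma mem_convexHull_image_compl_of_coord_eq_zero [LinearOrder k] [IsStrictOrderedRing k]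
    [Finite ι] (b : AffineBasis ι k V) {i : ι} {x : V} (hx : ∀ j, 0 ≤ b.coord j x)
    (hi : b.coord i x = 0) : x ∈ convexHull k (b '' {i}ᶜ) := by
  classical
  have := Fintype.ofFinite ι
  have hsum : ∑ j ∈ Finset.univ.erase i, b.coord j x = 1 := by
    rw [Finset.sum_erase (f := fun j => b.coord j x) _ hi, b.sum_coord_apply_eq_one]
  have hcomb : ∑ j ∈ Finset.univ.erase i, b.coord j x • b j = x := by
    rw [Finset.sum_erase (f := fun j => b.coord j x • b j) _ (by rw [hi, zero_smul]),
      b.linear_combination_coord_eq_self]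
  rw [← hcomb]
  exact (convex_convexHull k _).sum_mem (fun j _ => hx j) hsum fun j hj =>
    subset_convexHull k _ (mem_image_of_mem b (Finset.ne_of_mem_erase hj))

end AffineBasis

section NormedSpace

lemma affineIndependent_of_dist_lt_dist_add_dist {V P : Type*} [SeminormedAddCommGroup V]
    [NormedSpace ℝ V] [PseudoMetricSpace P] [NormedAddTorsor V P] {x y z : P}
    (hxz : dist x z < dist x y + dist y z) (hyx : dist y x < dist y z + dist z x)
    (hzy : dist z y < dist z x + dist x y) : AffineIndependent ℝ ![x, y, z] := by
  rw [affineIndependent_iff_not_collinear_set]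
  intro h
  rcases h.wbtw_or_wbtw_or_wbtw with h | h | h
  · exact hxz.ne h.dist_add_dist.symm
  · exact hyx.ne h.dist_add_dist.symm
  · exact hzy.ne h.dist_add_dist.symm

variable {ι E F : Type*} [NormedAddCommGroup E] [NormedSpace ℝ E]
  [NormedAddCommGroup F] [NormedSpace ℝ F]

lemma exists_dist_eq_of_le_add (hE : 1 < Module.rank ℝ E) {a b c : ℝ}
    (hab : a ≤ b + c) (hbc : b ≤ c + a) (hca : c ≤ a + b) :
    ∃ x y z : E, dist x y = a ∧ dist y z = b ∧ dist x z = c := by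
  have : Nontrivial E := rank_pos_iff_nontrivial.1 (zero_lt_one.trans hE)
  obtain ⟨u, hu⟩ := exists_norm_eq E zero_le_one
  have h_near : dist (a • u) (c • u) ≤ b := by
    rw [dist_eq_norm, ← sub_smul, norm_smul, hu, mul_one, Real.norm_eq_abs]
    exact abs_sub_le_iff.2 ⟨by linarith, by linarith⟩
  have h_far : b ≤ dist (a • u) (-c • u) := by
    rw [dist_eq_norm, ← sub_smul, norm_smul, hu, mul_one, Real.norm_eq_abs]
    exact (by linarith : b ≤ a - -c).trans (le_abs_self _)
  have mem_sphere (s : ℝ) (hs : |s| = c) : s • u ∈ Metric.sphere (0 : E) c := by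
    rw [mem_sphere_zero_iff_norm, norm_smul, hu, mul_one, Real.norm_eq_abs, hs]
  have hc : |c| = c := abs_of_nonneg (by linarith)
  -- The sphere is connected, so the distance to `a • u` takes the intermediate value `b` on it.
  obtain ⟨z, hz, hzb⟩ := (isPreconnected_sphere hE 0 c).intermediate_value
    (mem_sphere c hc) (mem_sphere (-c) (by rw [abs_neg, hc]))
    (continuous_const.dist continuous_id).continuousOn ⟨h_near, h_far⟩
  refine ⟨0, a • u, z, ?_, hzb, ?_⟩
  · rw [dist_zero_left, norm_smul, hu, mul_one, Real.norm_eq_abs, abs_of_nonneg (by linarith)]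
  · rw [dist_zero_left, mem_sphere_zero_iff_norm.1 hz]

open Filter in
lemma eventually_dist_le_mul_dist_map [FiniteDimensional ℝ E] {f : E →ₗ[ℝ] F}
    (hf : LinearMap.ker f = ⊥) : ∀ᶠ C : ℝ in atTop, ∀ x y,
      dist x y ≤ C * dist (f x) (f y) ∧ dist (f x) (f y) ≤ C * dist x y := by
  obtain ⟨K, -, hK⟩ := f.exists_antilipschitzWith hf
  filter_upwards [eventually_ge_atTop (K : ℝ), eventually_ge_atTop ‖f.toContinuousLinearMap‖]
    with C hKC hfC x y
  exact ⟨(hK.le_mul_dist x y).trans (by gcongr),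
    (f.toContinuousLinearMap.lipschitz.dist_le_mul x y).trans
      (mul_le_mul_of_nonneg_right hfC dist_nonneg)⟩

lemma convexHull_range_subset_interior_union [Finite ι] (b : AffineBasis ι ℝ E) :
    convexHull ℝ (range b) ⊆
      interior (convexHull ℝ (range b)) ∪ ⋃ i, convexHull ℝ (b '' {i}ᶜ) := by
  intro x hx
  rw [b.convexHull_eq_nonneg_coord] at hx
  rw [b.interior_convexHull]
  by_cases hpos : ∀ i, 0 < b.coord i x
  · exact Or.inl hpos
  · obtain ⟨i, hi⟩ := not_forall.1 hpos
    exact Or.inr (mem_iUnion.2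
      ⟨i, mem_convexHull_image_compl_of_coord_eq_zero b hx (le_antisymm (not_lt.1 hi) (hx i))⟩)

lemma lipschitzOnWith_one_of_mapsTo_segment {A : E →ᵃ[ℝ] F} {a b : E} {a' b' : F}
    (hA : MapsTo A (segment ℝ a b) (segment ℝ a' b')) (h : dist a' b' ≤ dist a b) :
    LipschitzOnWith 1 A (segment ℝ a b) := by
  have hAab : dist (A a) (A b) ≤ dist a b := by
    have hAa := hA (left_mem_segment ℝ a b)
    have hAb := hA (right_mem_segment ℝ a b)
    rw [← convexHull_pair] at hAa hAb
    have hdiam := Metric.dist_le_diam_of_mem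
      (isBounded_convexHull.2 (toFinite {a', b'}).isBounded) hAa hAb
    rw [convexHull_diam, Metric.diam_pair] at hdiam
    exact hdiam.trans h
  refine LipschitzOnWith.of_dist_le_mul fun z hz w hw => ?_
  rw [segment_eq_image_lineMap] at hz hw
  obtain ⟨s, -, rfl⟩ := hz
  obtain ⟨t, -, rfl⟩ := hw
  rw [A.apply_lineMap, A.apply_lineMap, dist_lineMap_lineMap, dist_lineMap_lineMap,
    NNReal.coe_one, one_mul]
  gcongr

end NormedSpace

section ConnectedCover

open Filter Topology Relation

lemma reflTransGen_of_isClosed_cover {X ι : Type*} [TopologicalSpace X] [PreconnectedSpace X]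
    {K : ι → Set X} (hfin : LocallyFinite K) (hK : ∀ i, IsClosed (K i)) (hcov : ⋃ i, K i = univ)
    (x y : X) : ReflTransGen (fun y z => ∃ i, y ∈ K i ∧ z ∈ K i) x y := by
  have : Std.Symm fun y z => ∃ i, y ∈ K i ∧ z ∈ K i := ⟨fun _ _ ⟨i, hy, hz⟩ => ⟨i, hz, hy⟩⟩
  refine PreconnectedSpace.induction₂ _ (fun x => ?_) inferInstance x y
  filter_upwards [hfin.iInter_compl_mem_nhds hK x] with y hy
  obtain ⟨i, hi⟩ := iUnion_eq_univ_iff.1 hcov y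
  exact .single ⟨i, by_contra fun hx => mem_iInter₂.1 hy i hx hi, hi⟩

end ConnectedCover

section StandardTriangle

lemma dist_p0_p1 : dist p0 p1 = 1 := by
  simp [p0, p1, EuclideanSpace.dist_eq]

lemma dist_p0_p2 : dist p0 p2 = 1 := by
  norm_num [p0, p2, EuclideanSpace.dist_eq, Real.dist_eq, div_pow]

lemma dist_p1_p2 : dist p1 p2 = 1 := by
  norm_num [p1, p2, EuclideanSpace.dist_eq, Real.dist_eq, div_pow]

/-- The vertices of the regular triangle as an affine basis of the plane; its coordinates are the
barycentric coordinates of the triangle. -/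
def vertexBasis : AffineBasis (Fin 3) ℝ E2 :=
  have ind : AffineIndependent ℝ ![p0, p1, p2] := by
    apply affineIndependent_of_dist_lt_dist_add_dist <;>
      norm_num [dist_comm p1 p0, dist_comm p2, dist_p0_p1, dist_p0_p2, dist_p1_p2]
  ⟨![p0, p1, p2], ind, ind.affineSpan_eq_top_iff_card_eq_finrank_add_one.2 (by simp)⟩

lemma coe_vertexBasis : ⇑vertexBasis = ![p0, p1, p2] := rfl

lemma range_vertexBasis : range vertexBasis = {p0, p1, p2} := by
  simp only [coe_vertexBasis, Matrix.range_cons, Matrix.range_empty, singleton_union,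
    insert_empty_eq]

lemma convexHull_vertexBasis_compl_mem_E0 (i : Fin 3) :
    convexHull ℝ (vertexBasis '' {i}ᶜ) ∈ E0 := by
  fin_cases i
  · have hcompl : ({0}ᶜ : Set (Fin 3)) = {1, 2} := by ext i; fin_cases i <;> simp
    exact .inr (.inl (by simp [hcompl, image_pair, coe_vertexBasis, e12]))
  · have hcompl : ({1}ᶜ : Set (Fin 3)) = {0, 2} := by ext i; fin_cases i <;> simp
    exact .inr (.inr (by simp [hcompl, image_pair, coe_vertexBasis, e02]))
  · have hcompl : ({2}ᶜ : Set (Fin 3)) = {0, 1} := by ext i; fin_cases i <;> simp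
    exact .inl (by simp [hcompl, image_pair, coe_vertexBasis, e01])

lemma mem_V0_or_mem_Do_or_mem_eo {z : E2} (hz : z ∈ Dtri) :
    z ∈ V0 ∨ z ∈ Do ∨ ∃ e ∈ E0, z ∈ eo e := by
  by_cases hV : z ∈ V0
  · exact Or.inl hV
  · rw [Dtri, ← range_vertexBasis] at hz
    rcases convexHull_range_subset_interior_union vertexBasis hz with hint | hface
    · rw [range_vertexBasis] at hint
      exact Or.inr (Or.inl hint)
    · obtain ⟨i, hi⟩ := mem_iUnion.1 hface
      exact Or.inr (Or.inr ⟨_, convexHull_vertexBasis_compl_mem_E0 i, hi, hV⟩)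

lemma isCompact_Dtri : IsCompact Dtri :=
  (toFinite {p0, p1, p2}).isCompact_convexHull (𝕜 := ℝ)

lemma V0_subset_Dtri : V0 ⊆ Dtri :=
  subset_convexHull ℝ _

lemma exists_eq_segment_of_mem_E0 {e : Set E2} (he : e ∈ E0) :
    ∃ a ∈ V0, ∃ b ∈ V0, dist a b = 1 ∧ e = segment ℝ a b := by
  rcases he with rfl | rfl | rfl
  · exact ⟨p0, by simp [V0], p1, by simp [V0], dist_p0_p1, rfl⟩
  · exact ⟨p1, by simp [V0], p2, by simp [V0], dist_p1_p2, rfl⟩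
  · exact ⟨p0, by simp [V0], p2, by simp [V0], dist_p0_p2, rfl⟩

lemma subset_Dtri_of_mem_E0 {e : Set E2} (he : e ∈ E0) : e ⊆ Dtri := by
  obtain ⟨a, ha, b, hb, -, rfl⟩ := exists_eq_segment_of_mem_E0 he
  exact (convex_convexHull ℝ _).segment_subset (V0_subset_Dtri ha) (V0_subset_Dtri hb)

lemma isClosed_of_mem_E0 {e : Set E2} (he : e ∈ E0) : IsClosed e := by
  obtain ⟨a, -, b, -, -, rfl⟩ := exists_eq_segment_of_mem_E0 he
  rw [← convexHull_pair]
  exact ((toFinite {a, b}).isCompact_convexHull (𝕜 := ℝ)).isClosed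

lemma lipschitzOnWith_one_of_image_edge_eq {e e' : Set E2} (he : e ∈ E0) (he' : e' ∈ E0)
    {A : E2 →ᵃ[ℝ] E2} (hA : A '' e = e') : LipschitzOnWith 1 A e := by
  obtain ⟨a, -, b, -, hab, rfl⟩ := exists_eq_segment_of_mem_E0 he
  obtain ⟨a', -, b', -, hab', rfl⟩ := exists_eq_segment_of_mem_E0 he'
  exact lipschitzOnWith_one_of_mapsTo_segment (mapsTo_iff_image_subset.2 hA.le)
    (hab'.trans hab.symm).le

/-- The closed faces of the regular triangle, in all dimensions: the triangle itself, its edges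
and its vertices (as singletons). -/
def closedFaces : Set (Set E2) :=
  insert Dtri (E0 ∪ singleton '' V0)

lemma finite_closedFaces : closedFaces.Finite :=
  (((toFinite {e01, e12, e02}).union ((toFinite {p0, p1, p2}).image _))).insert _

lemma isClosed_of_mem_closedFaces {F : Set E2} (hF : F ∈ closedFaces) : IsClosed F := by
  rcases hF with rfl | he | ⟨v, -, rfl⟩
  · exact isCompact_Dtri.isClosed
  · exact isClosed_of_mem_E0 he
  · exact isClosed_singleton

end StandardTriangle

section EdgeLengths

variable {l : Set E2 → ℝ} {f : E2 →ₗ[ℝ] E2}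

lemma TriIneq.lt_add (h : TriIneq l) :
    l e01 < l e12 + l e02 ∧ l e12 < l e02 + l e01 ∧ l e02 < l e01 + l e12 := by
  refine ⟨h.2 e12 e02 e01 ?_, h.2 e02 e01 e12 ?_, h.2 e01 e12 e02 rfl⟩ <;>
    ext e <;> simp only [E0, mem_insert_iff, mem_singleton_iff] <;> tauto

lemma TriIneq.exists_realizes (h : TriIneq l) : ∃ f : E2 →ₗ[ℝ] E2, Realizes f l := by
  obtain ⟨h01, h12, h02⟩ := h.lt_add
  have hrank : 1 < Module.rank ℝ E2 := by
    rw [← Module.finrank_eq_rank, finrank_euclideanSpace_fin]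
    norm_num
  obtain ⟨x, y, z, hxy, hyz, hxz⟩ := exists_dist_eq_of_le_add hrank h01.le h12.le h02.le
  obtain ⟨f, hf⟩ := exists_linearMap_sub_eq vertexBasis ![x, y, z]
  have hdist (i j : Fin 3) :
      dist (f (vertexBasis i)) (f (vertexBasis j)) = dist (![x, y, z] i) (![x, y, z] j) := by
    rw [dist_eq_norm, hf, ← dist_eq_norm]
  exact ⟨f, (hdist 0 1).trans hxy, (hdist 1 2).trans hyz, (hdist 0 2).trans hxz⟩

lemma Realizes.ker_eq_bot (hf : Realizes f l) (h : TriIneq l) : LinearMap.ker f = ⊥ := by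
  obtain ⟨h01, h12, h02⟩ := h.lt_add
  obtain ⟨hf01, hf12, hf02⟩ := hf
  apply ker_eq_bot_of_affineIndependent_comp vertexBasis
  have hcomp : f ∘ vertexBasis = ![f p0, f p1, f p2] := by
    ext i : 1
    fin_cases i <;> rfl
  rw [hcomp]
  apply affineIndependent_of_dist_lt_dist_add_dist
  · rwa [hf01, hf12, hf02]
  · rwa [dist_comm (f p1) (f p0), dist_comm (f p2) (f p0), hf01, hf12, hf02]
  · rwa [dist_comm (f p2) (f p1), dist_comm (f p2) (f p0), hf01, hf12, hf02]

lemma exists_dD_eq_dist (h : TriIneq l) :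
    ∃ f : E2 →ₗ[ℝ] E2, Realizes f l ∧ ∀ x y, dD l x y = dist (f x) (f y) :=
  ⟨h.exists_realizes.choose, h.exists_realizes.choose_spec, fun _ _ => dif_pos h.exists_realizes⟩

lemma dD_nonneg (l : Set E2 → ℝ) (x y : E2) : 0 ≤ dD l x y := by
  unfold dD
  split_ifs
  exacts [dist_nonneg, le_rfl]

open Filter in
lemma TriIneq.eventually_dist_le_mul_dD (h : TriIneq l) : ∀ᶠ C : ℝ in atTop, ∀ x y,
    dist x y ≤ C * dD l x y ∧ dD l x y ≤ C * dist x y := by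
  obtain ⟨f, hf, hdD⟩ := exists_dD_eq_dist h
  simpa only [hdD] using eventually_dist_le_mul_dist_map (hf.ker_eq_bot h)

end EdgeLengths

namespace Triangulation

section Gluing

variable (T : Triangulation S n) {i j : Fin n} {z w : E2}

lemma exists_apply_eq (x : S) : ∃ i, ∃ z ∈ Dtri, T.σ i z = x := by
  rcases T.cover.ge (mem_univ x) with (hx | hx) | hx
  · obtain ⟨i, z, hz, rfl⟩ := mem_iUnion.1 hx
    exact ⟨i, z, V0_subset_Dtri hz, rfl⟩
  · obtain ⟨i, z, hz, rfl⟩ := mem_iUnion.1 hx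
    exact ⟨i, z, interior_subset hz, rfl⟩
  · obtain ⟨i, hx⟩ := mem_iUnion.1 hx
    obtain ⟨e, he, z, hz, rfl⟩ := mem_iUnion₂.1 hx
    exact ⟨i, z, subset_Dtri_of_mem_E0 he hz.1, rfl⟩

lemma mem_V0_of_apply_eq (hz : z ∈ V0) (hw : w ∈ Dtri) (h : T.σ i z = T.σ j w) : w ∈ V0 := by
  have hzV : T.σ i z ∈ ⋃ k, T.σ k '' V0 := mem_iUnion.2 ⟨i, z, hz, rfl⟩
  rcases mem_V0_or_mem_Do_or_mem_eo hw with hw | hw | ⟨e, he, hw⟩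
  · exact hw
  · exact (disjoint_left.1 (T.disj_vert_int j) hzV ⟨w, hw, h.symm⟩).elim
  · exact (disjoint_left.1 (T.disj_vert_edge j e he) hzV ⟨w, hw, h.symm⟩).elim

lemma eq_of_apply_eq_of_mem_Do (hz : z ∈ Do) (hw : w ∈ Dtri) (h : T.σ i z = T.σ j w) :
    i = j ∧ z = w := by
  rcases mem_V0_or_mem_Do_or_mem_eo hw with hw | hw | ⟨e, he, hw⟩
  · exact (disjoint_left.1 (T.disj_vert_int i) (mem_iUnion.2 ⟨j, w, hw, h.symm⟩) ⟨z, hz, rfl⟩).elim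
  · obtain rfl : i = j := by
      by_contra hij
      exact disjoint_left.1 (T.disj_int i j hij) ⟨z, hz, rfl⟩ ⟨w, hw, h.symm⟩
    exact ⟨rfl, T.inj_int i hz hw h⟩
  · exact (disjoint_left.1 (T.disj_int_edge i j e he) ⟨z, hz, rfl⟩ ⟨w, hw, h.symm⟩).elim

lemma exists_edge_gluing {e : Set E2} (he : e ∈ E0) (hz : z ∈ eo e) (hw : w ∈ Dtri)
    (h : T.σ i z = T.σ j w) :
    ∃ e' ∈ E0, ∃ A : E2 →ᵃ[ℝ] E2, A '' e = e' ∧ (∀ x ∈ e, T.σ j (A x) = T.σ i x) ∧ A z = w := by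
  have hzD : z ∈ Dtri := subset_Dtri_of_mem_E0 he hz.1
  rcases mem_V0_or_mem_Do_or_mem_eo hw with hw | hw | ⟨e', he', hw⟩
  · exact (hz.2 (T.mem_V0_of_apply_eq hw hzD h.symm)).elim
  · exact (disjoint_left.1 (T.disj_int_edge j i e he) ⟨w, hw, rfl⟩ ⟨z, hz, h⟩).elim
  · have himage : T.σ i '' eo e = T.σ j '' eo e' :=
      (T.edge_eq_or_disjoint i j e he e' he').resolve_right fun hdisj =>
        disjoint_left.1 hdisj ⟨z, hz, rfl⟩ ⟨w, hw, h.symm⟩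
    obtain ⟨A, hAe, hA⟩ := T.glue i j e he e' he' himage
    have hAz : A z ∈ eo e' :=
      ⟨hAe ▸ mem_image_of_mem A hz.1, fun hV => hz.2 (T.mem_V0_of_apply_eq hV hzD (hA z hz.1))⟩
    exact ⟨e', he', A, hAe, hA, T.inj_edge j e' he' hAz hw ((hA z hz.1).trans h)⟩

lemma exists_lipschitz_gluing (hz : z ∈ Dtri) (hw : w ∈ Dtri) (h : T.σ i z = T.σ j w) :
    ∃ F ∈ closedFaces, z ∈ F ∧ ∃ g : E2 → E2, MapsTo g F Dtri ∧ LipschitzOnWith 1 g F ∧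
      EqOn (T.σ j ∘ g) (T.σ i) F ∧ g z = w := by
  rcases mem_V0_or_mem_Do_or_mem_eo hz with hzV | hzI | ⟨e, he, hze⟩
  · refine ⟨{z}, .inr (.inr ⟨z, hzV, rfl⟩), rfl, fun _ => w, fun _ _ => hw,
      (LipschitzWith.const' w).lipschitzOnWith, ?_, rfl⟩
    rintro _ rfl
    exact h.symm
  · obtain ⟨rfl, rfl⟩ := T.eq_of_apply_eq_of_mem_Do hzI hw h
    exact ⟨Dtri, .inl rfl, hz, id, mapsTo_id _, LipschitzWith.id.lipschitzOnWith,
      fun _ _ => rfl, rfl⟩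
  · obtain ⟨e', he', A, hAe, hA, hAz⟩ := T.exists_edge_gluing he hze hw h
    exact ⟨e, .inr (.inl he), hze.1, A,
      (mapsTo_iff_image_subset.2 hAe.le).mono_right (subset_Dtri_of_mem_E0 he'),
      lipschitzOnWith_one_of_image_edge_eq he he' hAe, hA, hAz⟩

end Gluing

section StarBall

open Filter Topology Metric

variable (T : Triangulation S n) {x : S} {r t : ℝ}

/-- The preimages of the point `x` in the `j`-th triangle. The map `T.σ j` is only meaningful on
`Dtri`, hence the intersection. -/
def fiber (x : S) (j : Fin n) : Set E2 :=
  Dtri ∩ T.σ j ⁻¹' {x}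

lemma finite_fiber (x : S) (j : Fin n) : (T.fiber x j).Finite := by
  have hinj {A : Set E2} (hA : InjOn (T.σ j) A) : (A ∩ T.σ j ⁻¹' {x}).Finite :=
    Subsingleton.finite fun _ hz _ hw => hA hz.1 hw.1 (hz.2.trans hw.2.symm)
  have hE0 : E0.Finite := toFinite {e01, e12, e02}
  have hV0 : V0.Finite := toFinite {p0, p1, p2}
  refine (((hV0.inter_of_left (T.σ j ⁻¹' {x})).union (hinj (T.inj_int j))).union
    (hE0.biUnion fun e he => hinj (T.inj_edge j e he))).subset fun z hz => ?_
  rcases mem_V0_or_mem_Do_or_mem_eo hz.1 with hV | hI | ⟨e, he, hze⟩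
  · exact .inl (.inl ⟨hV, hz.2⟩)
  · exact .inl (.inr ⟨hI, hz.2⟩)
  · exact .inr (mem_iUnion₂.2 ⟨e, he, hze, hz.2⟩)

/-- The ball of radius `t` around `x` in the star of `x`: the points lying, in some triangle, at
Euclidean distance less than `t` from a preimage of `x`. -/
def starBall (x : S) (t : ℝ) : Set S :=
  ⋃ j, T.σ j '' (Dtri ∩ thickening t (T.fiber x j))

/-- A radius `r` isolates `x` if a preimage of `x` lies in every closed face at distance less
than `r` from it; then a gluing defined at a point of `starBall x r` carries the nearby preimage
of `x` along. -/
def IsIsolatingRadius (x : S) (r : ℝ) : Prop :=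
  ∀ j, ∀ w ∈ T.fiber x j, ∀ F ∈ closedFaces, w ∈ thickening r F → w ∈ F

lemma eventually_isIsolatingRadius (x : S) : ∀ᶠ r in 𝓝 0, T.IsIsolatingRadius x r := by
  refine eventually_all.2 fun j => ((T.finite_fiber x j).eventually_all).2 fun w _ =>
    finite_closedFaces.eventually_all.2 fun F hF => ?_
  by_cases hw : w ∈ F
  · exact .of_forall fun _ _ => hw
  · rw [← (isClosed_of_mem_closedFaces hF).closure_eq] at hw
    exact (eventually_notMem_thickening_of_infEDist_pos hw).mono fun _ hr h => (hr h).elim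

lemma eventually_starBall_subset {U : Set S} (hU : IsOpen U) (hx : x ∈ U) :
    ∀ᶠ t in 𝓝 0, T.starBall x t ⊆ U := by
  simp only [starBall, iUnion_subset_iff, image_subset_iff]
  refine eventually_all.2 fun j => ?_
  obtain ⟨V, hV, hVU⟩ := continuousOn_iff'.1 (T.continuousOn j) U hU
  have hfiber : T.fiber x j ⊆ V := fun w hw => (hVU.le ⟨mem_preimage.2 (hw.2.symm ▸ hx), hw.1⟩).1
  obtain ⟨δ, hδ, hδV⟩ := (T.finite_fiber x j).isCompact.exists_thickening_subset_open hV hfiber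
  filter_upwards [eventually_le_nhds hδ] with t ht z hz
  exact (hVU.ge ⟨hδV (thickening_mono ht _ hz.2), hz.1⟩).1

lemma exists_isIsolatingRadius_starBall_subset {U : Set S} (hU : IsOpen U) (hx : x ∈ U) :
    ∃ r > 0, T.IsIsolatingRadius x r ∧ T.starBall x r ⊆ U := by
  have hnear := (T.eventually_isIsolatingRadius x).and (T.eventually_starBall_subset hU hx)
  exact (eventually_mem_nhdsWithin.and (hnear.filter_mono (nhdsWithin_le_nhds (s := Ioi 0)))).exists

lemma mem_starBall_self (x : S) (ht : 0 < t) : x ∈ T.starBall x t := by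
  obtain ⟨i, z, hz, hzx⟩ := T.exists_apply_eq x
  exact mem_iUnion.2 ⟨i, z, ⟨hz, self_subset_thickening ht _ ⟨hz, hzx⟩⟩, hzx⟩

variable {T} in
lemma IsIsolatingRadius.mem_thickening_fiber (hr : T.IsIsolatingRadius x r) (htr : t ≤ r)
    {i : Fin n} {u : E2} (hu : u ∈ Dtri) (hux : T.σ i u ∈ T.starBall x t) :
    u ∈ thickening t (T.fiber x i) := by
  obtain ⟨j, z, ⟨hz, hzt⟩, hzu⟩ := mem_iUnion.1 hux
  obtain ⟨w, hw, hzw⟩ := mem_thickening_iff.1 hzt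
  obtain ⟨F, hF, hzF, g, hgD, hg, hgσ, rfl⟩ := T.exists_lipschitz_gluing hz hu hzu
  have hwF : w ∈ F :=
    hr j w hw F hF (mem_thickening_iff.2 ⟨z, hzF, (dist_comm w z).trans_lt (hzw.trans_le htr)⟩)
  refine mem_thickening_iff.2 ⟨g w, ⟨hgD hwF, (hgσ hwF).trans hw.2⟩, ?_⟩
  calc dist (g z) (g w) ≤ (1 : NNReal) * dist z w := hg.dist_le_mul z hzF w hwF
    _ = dist z w := by rw [NNReal.coe_one, one_mul]
    _ < t := hzw

end StarBall

section GluedMetric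

variable (T : Triangulation S n) (l : Set S → ℝ) {i : Fin n} {x y y' : S} {r C : ℝ}

lemma exists_dTri_eq (hy : y ∈ T.σ i '' Dtri) (hy' : y' ∈ T.σ i '' Dtri) :
    ∃ u ∈ Dtri, ∃ v ∈ Dtri, T.σ i u = y ∧ T.σ i v = y' ∧
      dTri T l i y y' = dD (lRes T l i) u v := by
  have hfin : {s | ∃ u ∈ Dtri, ∃ v ∈ Dtri,
      T.σ i u = y ∧ T.σ i v = y' ∧ s = dD (lRes T l i) u v}.Finite := by
    refine ((T.finite_fiber y i).image2 (dD (lRes T l i)) (T.finite_fiber y' i)).subset ?_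
    rintro _ ⟨u, hu, v, hv, huy, hvy', rfl⟩
    exact mem_image2_of_mem ⟨hu, huy⟩ ⟨hv, hvy'⟩
  obtain ⟨u, hu, huy⟩ := hy
  obtain ⟨v, hv, hvy'⟩ := hy'
  have hmin := fun hne => Nonempty.csInf_mem hne hfin
  exact hmin ⟨_, u, hu, v, hv, huy, hvy', rfl⟩

lemma dTri_nonneg (i : Fin n) (y y' : S) : 0 ≤ dTri T l i y y' := by
  refine Real.sInf_nonneg ?_
  rintro _ ⟨u, -, v, -, -, -, rfl⟩
  exact dD_nonneg _ u v

lemma dTri_apply_le {u v : E2} (hu : u ∈ Dtri) (hv : v ∈ Dtri) :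
    dTri T l i (T.σ i u) (T.σ i v) ≤ dD (lRes T l i) u v := by
  refine csInf_le ⟨0, ?_⟩ ⟨u, hu, v, hv, rfl, rfl, rfl⟩
  rintro _ ⟨u, -, v, -, -, -, rfl⟩
  exact dD_nonneg _ u v

lemma zero_mem_chainSums [Nonempty (Fin n)] (x : S) : 0 ∈ chainSums T l x x :=
  ⟨0, fun _ => x, fun _ => Classical.arbitrary _, rfl, rfl, by simp, by simp⟩

lemma dTri_add_mem_chainSums {s : ℝ} (hx : x ∈ T.σ i '' Dtri) (hy : y ∈ T.σ i '' Dtri)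
    (hs : s ∈ chainSums T l y y') : dTri T l i x y + s ∈ chainSums T l x y' := by
  obtain ⟨k, c, idx, rfl, rfl, hc, rfl⟩ := hs
  refine ⟨k + 1, fun j => j.casesOn x c, fun j => j.casesOn i idx, rfl, rfl, ?_, ?_⟩
  · rintro (_ | j) hj
    · exact ⟨hx, hy⟩
    · exact hc j (Nat.lt_of_succ_lt_succ hj)
  · rw [Finset.sum_range_succ', add_comm]
    rfl

variable {T l}

lemma chainSums_induction {P : S → ℝ → Prop} (nil : P x 0)
    (snoc : ∀ i y y' s, P y s → y ∈ T.σ i '' Dtri → y' ∈ T.σ i '' Dtri →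
      P y' (s + dTri T l i y y')) :
    ∀ s ∈ chainSums T l x y, P y s := by
  rintro _ ⟨k, c, idx, rfl, rfl, hc, rfl⟩
  induction k with
  | zero => exact nil
  | succ k ih =>
    rw [Finset.sum_range_succ]
    exact snoc (idx k) _ _ _ (ih fun j hj => hc j (hj.trans k.lt_succ_self))
      (hc k k.lt_succ_self).1 (hc k k.lt_succ_self).2

lemma chainSums_nonneg : ∀ s ∈ chainSums T l x y, 0 ≤ s :=
  chainSums_induction (P := fun _ s => 0 ≤ s) le_rfl fun i y y' _ hs _ _ =>
    add_nonneg hs (dTri_nonneg T l i y y')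

variable (T l) in
lemma chainSums_nonempty [T2Space S] [PreconnectedSpace S] (x y : S) :
    (chainSums T l x y).Nonempty := by
  have : Nonempty (Fin n) := ⟨(T.exists_apply_eq x).choose⟩
  have hclosed (i : Fin n) : IsClosed (T.σ i '' Dtri) :=
    (isCompact_Dtri.image_of_continuousOn (T.continuousOn i)).isClosed
  have hcover : ⋃ i, T.σ i '' Dtri = univ := iUnion_eq_univ_iff.2 T.exists_apply_eq
  induction reflTransGen_of_isClosed_cover (locallyFinite_of_finite _) hclosed hcover x y using
    Relation.ReflTransGen.head_induction_on with
  | refl => exact ⟨0, zero_mem_chainSums T l y⟩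
  | head hstep _ ih =>
    obtain ⟨i, hx, hx'⟩ := hstep
    obtain ⟨s, hs⟩ := ih
    exact ⟨_, dTri_add_mem_chainSums T l hx hx' hs⟩

variable (T l) in
lemma dGlue_apply_le {u v : E2} (hu : u ∈ Dtri) (hv : v ∈ Dtri) :
    dGlue T l (T.σ i u) (T.σ i v) ≤ dD (lRes T l i) u v := by
  have : Nonempty (Fin n) := ⟨i⟩
  have hmem := dTri_add_mem_chainSums T l (mem_image_of_mem _ hu) (mem_image_of_mem _ hv)
    (zero_mem_chainSums T l (T.σ i v))
  rw [add_zero] at hmem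
  exact (csInf_le ⟨0, chainSums_nonneg⟩ hmem).trans (dTri_apply_le T l hu hv)

open Filter in
lemma exists_dist_le_mul_dD (hl : TriIneqT T l) : ∃ C > 0, ∀ i u v,
    dist u v ≤ C * dD (lRes T l i) u v ∧ dD (lRes T l i) u v ≤ C * dist u v :=
  have hC : ∀ᶠ C : ℝ in atTop, ∀ i u v,
      dist u v ≤ C * dD (lRes T l i) u v ∧ dD (lRes T l i) u v ≤ C * dist u v :=
    eventually_all.2 fun i => TriIneq.eventually_dist_le_mul_dD ⟨hl.1 i, hl.2 i⟩
  ((eventually_gt_atTop 0).and hC).exists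

lemma IsIsolatingRadius.mem_starBall_add_dTri {t : ℝ} (hr : T.IsIsolatingRadius x r)
    (hC : ∀ u v, dist u v ≤ C * dD (lRes T l i) u v) (htr : t ≤ r)
    (hyt : y ∈ T.starBall x t) (hy : y ∈ T.σ i '' Dtri) (hy' : y' ∈ T.σ i '' Dtri) :
    y' ∈ T.starBall x (t + C * dTri T l i y y') := by
  obtain ⟨u, hu, v, hv, rfl, rfl, huv⟩ := T.exists_dTri_eq l hy hy'
  obtain ⟨w, hw, huw⟩ := Metric.mem_thickening_iff.1 (hr.mem_thickening_fiber htr hu hyt)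
  refine mem_iUnion.2 ⟨i, v, ⟨hv, Metric.mem_thickening_iff.2 ⟨w, hw, ?_⟩⟩, rfl⟩
  calc dist v w ≤ dist u w + dist u v := by
        rw [add_comm, dist_comm u v]
        exact dist_triangle v u w
    _ < t + C * dTri T l i (T.σ i u) (T.σ i v) := by
        rw [huv]
        exact add_lt_add_of_lt_of_le huw (hC u v)

lemma IsIsolatingRadius.mem_starBall_of_mem_chainSums {s δ : ℝ} (hr : T.IsIsolatingRadius x r)
    (hC₀ : 0 ≤ C) (hC : ∀ i u v, dist u v ≤ C * dD (lRes T l i) u v) (hδ : 0 < δ)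
    (hs : s ∈ chainSums T l x y) (hδr : δ + C * s ≤ r) : y ∈ T.starBall x (δ + C * s) := by
  refine chainSums_induction (P := fun y s => δ + C * s ≤ r → y ∈ T.starBall x (δ + C * s))
    (fun _ => ?_) (fun i y y' s ih hy hy' hr' => ?_) s hs hδr
  · rw [mul_zero, add_zero]
    exact T.mem_starBall_self x hδ
  · rw [mul_add, ← add_assoc] at hr' ⊢
    have hsr : δ + C * s ≤ r :=
      (le_add_of_nonneg_right (mul_nonneg hC₀ (dTri_nonneg T l i y y'))).trans hr'
    exact hr.mem_starBall_add_dTri (hC i) hsr (ih hsr) hy hy'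

lemma IsIsolatingRadius.mem_starBall_of_dGlue_lt [T2Space S] [PreconnectedSpace S]
    (hr : T.IsIsolatingRadius x r) (hC₀ : 0 < C)
    (hC : ∀ i u v, dist u v ≤ C * dD (lRes T l i) u v) (hy : dGlue T l x y < r / C) :
    y ∈ T.starBall x r := by
  obtain ⟨s, hs, hsr⟩ := exists_lt_of_csInf_lt (chainSums_nonempty T l x y) hy
  have hδ : 0 < r - C * s := sub_pos.2 ((lt_div_iff₀' hC₀).1 hsr)
  have hmem := hr.mem_starBall_of_mem_chainSums hC₀.le hC hδ hs (sub_add_cancel _ _).le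
  rwa [sub_add_cancel] at hmem

end GluedMetric

lemma isOpen_iff_forall_isOpen_preimage [T2Space S] (T : Triangulation S n) {U : Set S} :
    IsOpen U ↔ ∀ i, IsOpen {z : Dtri | T.σ i z ∈ U} := by
  have : CompactSpace Dtri := isCompact_iff_compactSpace.1 isCompact_Dtri
  have hquot : Topology.IsQuotientMap fun p : Σ _ : Fin n, Dtri => T.σ p.1 p.2 := by
    refine .of_surjective_continuous (fun x => ?_)
      (continuous_sigma fun i => (T.continuousOn i).domRestrict)
    obtain ⟨i, z, hz, rfl⟩ := T.exists_apply_eq x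
    exact ⟨⟨i, z, hz⟩, rfl⟩
  rw [← hquot.isOpen_preimage, isOpen_sigma_iff]
  rfl

end Triangulation

/-- Proposition 3.5: the topology induced on `S` by the metric `d[l]`
coincides with the original topology on `S`. -/
theorem dGlue_topology_eq
    {S : Type} [TopologicalSpace S] [CompactSpace S] [T2Space S] [ConnectedSpace S]
    {n : ℕ} (T : Triangulation S n) (l : Set S → ℝ) (hl : TriIneqT T l) :
    ∀ U : Set S, IsOpen U ↔
      ∀ x ∈ U, ∃ ε > 0, ∀ y : S, dGlue T l x y < ε → y ∈ U := by
  intro U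
  obtain ⟨C, hC₀, hC⟩ := Triangulation.exists_dist_le_mul_dD hl
  constructor
  · intro hU x hx
    obtain ⟨r, hr₀, hr, hrU⟩ := T.exists_isIsolatingRadius_starBall_subset hU hx
    exact ⟨r / C, div_pos hr₀ hC₀, fun y hy =>
      hrU (hr.mem_starBall_of_dGlue_lt hC₀ (fun i u v => (hC i u v).1) hy)⟩
  · intro hU
    refine T.isOpen_iff_forall_isOpen_preimage.2 fun i => Metric.isOpen_iff.2 fun z hz => ?_
    obtain ⟨ε, hε, hball⟩ := hU _ hz
    refine ⟨ε / C, div_pos hε hC₀, fun w hw => hball _ ?_⟩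
    calc dGlue T l (T.σ i z) (T.σ i w)
      _ ≤ dD (lRes T l i) z w := Triangulation.dGlue_apply_le T l z.2 w.2
      _ ≤ C * dist z w := (hC i z w).2
      _ < ε := (lt_div_iff₀' hC₀).1 (Metric.mem_ball'.1 hw)
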